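/- arXiv:1811.12588 — 2 statements merged into one kernel-verified Lean document; each statement's English description precedes it below -/
import Mathlib

section
/- Let R be a rigid subcategory of C and let X be a subcategory of C contained in R∗R[1]. Then X is a two-term R[1]-cluster tilting subcategory of C if and only if X is a contravariantly finite two-term maximal R[1]-rigid subcategory of C. -/
/-!
Setting: `C` is a Hom-finite Krull–Schmidt `k`-linear triangulated category over an
algebraically closed field `k` (Krull–Schmidt is encoded as Hom-finiteness together with
idempotent completeness). Subcategories are identified with their classes of objects and
are always assumed full, closed under isomorphisms, direct sums and direct summands.
-/

open CategoryTheory CategoryTheory.Limits CategoryTheory.Pretriangulated Opposite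

universe v u

variable {C : Type u} [Category.{v} C] [Preadditive C] [HasZeroObject C] [HasShift C ℤ]
  [∀ n : ℤ, (shiftFunctor C n).Additive] [Pretriangulated C]

/-- `Y` is a direct summand (retract) of `X`. -/
def IsRetractOf {D : Type*} [Category D] (Y X : D) : Prop :=
  ∃ (s : Y ⟶ X) (r : X ⟶ Y), s ≫ r = 𝟙 Y

/-- `S` is a direct sum (biproduct) of `F` and `G`. -/
def IsDirectSumOf {D : Type*} [Category D] [Preadditive D] (S F G : D) : Prop :=
  ∃ (i : F ⟶ S) (j : G ⟶ S) (p : S ⟶ F) (q : S ⟶ G),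
    i ≫ p = 𝟙 F ∧ j ≫ q = 𝟙 G ∧ i ≫ q = 0 ∧ j ≫ p = 0 ∧ p ≫ i + q ≫ j = 𝟙 S

/-- A subcategory of an additive category, identified with its class of objects:
closed under isomorphisms, finite direct sums and direct summands. -/
def IsSubcat {D : Type*} [Category D] [Preadditive D] (S : Set D) : Prop :=
  (∀ ⦃X Y : D⦄, (X ≅ Y) → X ∈ S → Y ∈ S) ∧
  (∀ ⦃F G T : D⦄, F ∈ S → G ∈ S → IsDirectSumOf T F G → T ∈ S) ∧
  (∀ ⦃X Y : D⦄, X ∈ S → IsRetractOf Y X → Y ∈ S)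

/-- `f : X ⟶ A` is a right `𝓧`-approximation of `A`:
every map `X' ⟶ A` with `X' ∈ 𝓧` factors through `f`. -/
def IsRightApprox {D : Type*} [Category D] (𝓧 : Set D) {X A : D} (f : X ⟶ A) : Prop :=
  ∀ X' ∈ 𝓧, ∀ g : X' ⟶ A, ∃ h : X' ⟶ X, h ≫ f = g

/-- `f : A ⟶ X` is a left `𝓧`-approximation of `A`:
every map `A ⟶ X'` with `X' ∈ 𝓧` factors through `f`. -/
def IsLeftApprox {D : Type*} [Category D] (𝓧 : Set D) {A X : D} (f : A ⟶ X) : Prop :=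
  ∀ X' ∈ 𝓧, ∀ g : A ⟶ X', ∃ h : X ⟶ X', f ≫ h = g

/-- `𝓧` is contravariantly finite: every object admits a right `𝓧`-approximation. -/
def ContravariantlyFinite {D : Type*} [Category D] (𝓧 : Set D) : Prop :=
  ∀ A : D, ∃ X ∈ 𝓧, ∃ f : X ⟶ A, IsRightApprox 𝓧 f

/-- `𝓧` is covariantly finite: every object admits a left `𝓧`-approximation. -/
def CovariantlyFinite {D : Type*} [Category D] (𝓧 : Set D) : Prop :=
  ∀ A : D, ∃ X ∈ 𝓧, ∃ f : A ⟶ X, IsLeftApprox 𝓧 f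

/-- `𝓧` is functorially finite. -/
def FunctoriallyFinite {D : Type*} [Category D] (𝓧 : Set D) : Prop :=
  ContravariantlyFinite 𝓧 ∧ CovariantlyFinite 𝓧

/-- `𝓧 ∨ add M`: the smallest subcategory containing `𝓧` and `M`. -/
def veeAdd {D : Type*} [Category D] [Preadditive D] (𝓧 : Set D) (M : D) : Set D :=
  ⋂₀ {T : Set D | IsSubcat T ∧ 𝓧 ⊆ T ∧ M ∈ T}

/-- The shift `𝓢⟦n⟧` of a subcategory (closed under isomorphism). -/
def shiftSet (𝓢 : Set C) (n : ℤ) : Set C := {Y | ∃ X ∈ 𝓢, Nonempty (Y ≅ X⟦n⟧)}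

/-- `𝓐 ∗ 𝓑`: the class of objects `M` admitting a distinguished triangle
`A → M → B → A⟦1⟧` with `A ∈ 𝓐` and `B ∈ 𝓑`. -/
def starSet (𝓐 𝓑 : Set C) : Set C :=
  {M | ∃ A ∈ 𝓐, ∃ B ∈ 𝓑, ∃ (f : A ⟶ M) (g : M ⟶ B) (h : B ⟶ A⟦(1:ℤ)⟧),
    Triangle.mk f g h ∈ distTriang C}

/-- `𝓡 ∗ 𝓡[1]`, the class of two-term objects with respect to `𝓡`. -/
def twoTerm (𝓡 : Set C) : Set C := starSet 𝓡 (shiftSet 𝓡 1)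

/-- `𝓡` is rigid: `Hom(R, R'[1]) = 0` for all `R, R' ∈ 𝓡`. -/
def IsRigidSubcat (𝓡 : Set C) : Prop :=
  ∀ R ∈ 𝓡, ∀ R' ∈ 𝓡, ∀ φ : R ⟶ R'⟦(1:ℤ)⟧, φ = 0

/-- `φ` lies in the ideal `[𝓡[1]]` of morphisms factoring through an object of `𝓡⟦1⟧`. -/
def InShiftIdeal (𝓡 : Set C) {A B : C} (φ : A ⟶ B) : Prop :=
  ∃ R ∈ 𝓡, ∃ (a : A ⟶ R⟦(1:ℤ)⟧) (b : R⟦(1:ℤ)⟧ ⟶ B), φ = a ≫ b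

/-- `𝓧` is `𝓡[1]`-rigid: `[𝓡[1]](𝓧, 𝓧[1]) = 0`. -/
def IsRelRigid (𝓡 𝓧 : Set C) : Prop :=
  ∀ X ∈ 𝓧, ∀ X' ∈ 𝓧, ∀ φ : X ⟶ X'⟦(1:ℤ)⟧, InShiftIdeal 𝓡 φ → φ = 0

/-- `[𝓡[1]](M, 𝓧[1]) = 0`. -/
def relOrthTo (𝓡 𝓧 : Set C) (M : C) : Prop :=
  ∀ X ∈ 𝓧, ∀ φ : M ⟶ X⟦(1:ℤ)⟧, InShiftIdeal 𝓡 φ → φ = 0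

/-- `[𝓡[1]](𝓧, M[1]) = 0`. -/
def relOrthFrom (𝓡 𝓧 : Set C) (M : C) : Prop :=
  ∀ X ∈ 𝓧, ∀ φ : X ⟶ M⟦(1:ℤ)⟧, InShiftIdeal 𝓡 φ → φ = 0

/-- `𝓧 ⊆ 𝓡 ∗ 𝓡[1]` is two-term maximal `𝓡[1]`-rigid: it is `𝓡[1]`-rigid and for every
`M ∈ 𝓡 ∗ 𝓡[1]`, `[𝓡[1]](𝓧 ∨ add M, (𝓧 ∨ add M)[1]) = 0` implies `M ∈ 𝓧`. -/
def IsTwoTermMaxRelRigid (𝓡 𝓧 : Set C) : Prop :=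
  𝓧 ⊆ twoTerm 𝓡 ∧ IsRelRigid 𝓡 𝓧 ∧
  ∀ M ∈ twoTerm 𝓡, IsRelRigid 𝓡 (veeAdd 𝓧 M) → M ∈ 𝓧

/-- `𝓧 ⊆ 𝓡 ∗ 𝓡[1]` is two-term weak `𝓡[1]`-cluster tilting: `𝓡 ⊆ 𝓧[-1] ∗ 𝓧` and
`𝓧 = {M ∈ 𝓡 ∗ 𝓡[1] : [𝓡[1]](M, 𝓧[1]) = 0 and [𝓡[1]](𝓧, M[1]) = 0}`. -/
def IsTwoTermWeakRelCT (𝓡 𝓧 : Set C) : Prop :=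
  𝓧 ⊆ twoTerm 𝓡 ∧
  (∀ R ∈ 𝓡, R ∈ starSet (shiftSet 𝓧 (-1)) 𝓧) ∧
  (∀ M : C, M ∈ 𝓧 ↔ M ∈ twoTerm 𝓡 ∧ relOrthTo 𝓡 𝓧 M ∧ relOrthFrom 𝓡 𝓧 M)

/-- `𝓧 ⊆ 𝓡 ∗ 𝓡[1]` is two-term `𝓡[1]`-cluster tilting: `𝓧` is contravariantly finite and
`𝓧 = {M ∈ 𝓡 ∗ 𝓡[1] : [𝓡[1]](M, 𝓧[1]) = 0 and [𝓡[1]](𝓧, M[1]) = 0}`. -/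
def IsTwoTermRelCT (𝓡 𝓧 : Set C) : Prop :=
  𝓧 ⊆ twoTerm 𝓡 ∧ ContravariantlyFinite 𝓧 ∧
  (∀ M : C, M ∈ 𝓧 ↔ M ∈ twoTerm 𝓡 ∧ relOrthTo 𝓡 𝓧 M ∧ relOrthFrom 𝓡 𝓧 M)

/-!
Only the inclusion of the relative orthogonal of a maximal `𝓡[1]`-rigid `𝓧` in `𝓧` is hard: for `M`
orthogonal to `𝓧` on both sides one must show `[𝓡[1]](M, M[1]) = 0`. A map `M ⟶ R[1] ⟶ M[1]`
vanishes as soon as `M ⟶ R[1]` factors through an object of `𝓧`, so it suffices that a right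
`𝓧`-approximation `u : X ⟶ R[1]` also approximates `M`.

Classically one completes `u` to a triangle `R ⟶ Z ⟶ X ⟶ R[1]` and shows `Z ∈ 𝓧` by maximality;
that `Z` is two-term uses the octahedral axiom. Instead, take a two-term triangle
`R₀ ⟶ X ⟶ B ⟶ R₀[1]`, factor `u` as `X ⟶ B ⟶ R[1]`, and let `Z` be the cocone of the map
`B ⟶ R₀[1] ⊞ R[1] ≅ (R₀ ⊞ R)[1]` with these two components. Then `Z` is two-term by construction,
and the orthogonality relations of a two-term object say exactly that the connecting morphism
of its triangle is an approximation.
-/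

section Approximation

variable {D : Type*} [Category D]

lemma isRightApprox_comp_iso_iff {S : Set D} {X A B : D} {f : X ⟶ A} (e : A ≅ B) :
    IsRightApprox S (f ≫ e.hom) ↔ IsRightApprox S f := by
  constructor
  · intro hf M hM x
    obtain ⟨c, hc⟩ := hf M hM (x ≫ e.hom)
    exact ⟨c, by simpa only [← Category.assoc, cancel_mono] using hc⟩
  · intro hf M hM x
    obtain ⟨c, hc⟩ := hf M hM (x ≫ e.inv)
    exact ⟨c, by rw [← Category.assoc, hc, Category.assoc, e.inv_hom_id, Category.comp_id]⟩

lemma IsLeftApprox.of_comp {S : Set D} {A X Y : D} {f : A ⟶ X} {g : X ⟶ Y}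
    (h : IsLeftApprox S (f ≫ g)) : IsLeftApprox S f := by
  intro N hN y
  obtain ⟨c, hc⟩ := h N hN y
  exact ⟨g ≫ c, by rw [← Category.assoc, hc]⟩

end Approximation

section Subcategory

variable {D : Type*} [Category D] [Preadditive D]

lemma IsSubcat.of_retract {S : Set D}
    (hsum : ∀ ⦃F G T : D⦄, F ∈ S → G ∈ S → IsDirectSumOf T F G → T ∈ S)
    (hretract : ∀ ⦃X Y : D⦄, X ∈ S → IsRetractOf Y X → Y ∈ S) : IsSubcat S :=
  ⟨fun _ _ e hX => hretract hX ⟨e.inv, e.hom, e.inv_hom_id⟩, hsum, hretract⟩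

lemma IsSubcat.biprod_mem {S : Set D} (hS : IsSubcat S) {F G : D} [HasBinaryBiproduct F G]
    (hF : F ∈ S) (hG : G ∈ S) : (F ⊞ G) ∈ S :=
  hS.2.1 hF hG ⟨biprod.inl, biprod.inr, biprod.fst, biprod.snd, biprod.inl_fst, biprod.inr_snd,
    biprod.inl_snd, biprod.inr_fst, biprod.total⟩

lemma insert_subset_veeAdd (𝓧 : Set D) (M : D) : insert M 𝓧 ⊆ veeAdd 𝓧 M :=
  Set.subset_sInter fun _ hT => Set.insert_subset hT.2.2 hT.2.1

lemma veeAdd_subset {𝓧 T : Set D} {M : D} (hT : IsSubcat T) (h : insert M 𝓧 ⊆ T) :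
    veeAdd 𝓧 M ⊆ T :=
  Set.sInter_subset_of_mem ⟨hT, (Set.subset_insert M 𝓧).trans h, h (Set.mem_insert M 𝓧)⟩

end Subcategory

section RelativeRigidity

variable {D : Type*} [Category D] [HasShift D ℤ] {𝓡 : Set D}

lemma InShiftIdeal.precomp {A' A B : D} {φ : A ⟶ B} (hφ : InShiftIdeal 𝓡 φ) (s : A' ⟶ A) :
    InShiftIdeal 𝓡 (s ≫ φ) := by
  obtain ⟨R, hR, a, b, rfl⟩ := hφ
  exact ⟨R, hR, s ≫ a, b, (Category.assoc _ _ _).symm⟩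

lemma InShiftIdeal.postcomp {A B B' : D} {φ : A ⟶ B} (hφ : InShiftIdeal 𝓡 φ) (s : B ⟶ B') :
    InShiftIdeal 𝓡 (φ ≫ s) := by
  obtain ⟨R, hR, a, b, rfl⟩ := hφ
  exact ⟨R, hR, a, b ≫ s, Category.assoc _ _ _⟩

lemma inShiftIdeal_comp_of_mem_shiftSet {A B N : D} (hB : B ∈ shiftSet 𝓡 1) (a : A ⟶ B)
    (b : B ⟶ N) : InShiftIdeal 𝓡 (a ≫ b) := by
  obtain ⟨R, hR, ⟨e⟩⟩ := hB
  exact ⟨R, hR, a ≫ e.hom, e.inv ≫ b, by rw [Category.assoc, e.hom_inv_id_assoc]⟩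

variable [Preadditive D]

lemma IsRigidSubcat.eq_zero_of_mem_shiftSet (h𝓡 : IsRigidSubcat 𝓡) {R B : D} (hR : R ∈ 𝓡)
    (hB : B ∈ shiftSet 𝓡 1) (φ : R ⟶ B) : φ = 0 := by
  obtain ⟨R', hR', ⟨e⟩⟩ := hB
  rw [← cancel_mono e.hom, zero_comp]
  exact h𝓡 R hR R' hR' _

variable (𝓡) in
lemma isSubcat_setOf_relOrthTo (S : Set D) : IsSubcat {M | relOrthTo 𝓡 S M} := by
  apply IsSubcat.of_retract
  · rintro F G T hF hG ⟨i, j, p, q, -, -, -, -, htotal⟩ V hV φ hφ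
    calc φ = p ≫ i ≫ φ + q ≫ j ≫ φ := by
          rw [← Category.assoc, ← Category.assoc, ← Preadditive.add_comp, htotal, Category.id_comp]
      _ = 0 := by
          rw [hF V hV _ (hφ.precomp i), hG V hV _ (hφ.precomp j), comp_zero, comp_zero, add_zero]
  · rintro X Y hX ⟨s, r, hsr⟩ V hV φ hφ
    rw [← Category.id_comp φ, ← hsr, Category.assoc, hX V hV _ (hφ.precomp r), comp_zero]

lemma IsRelRigid.mono {S T : Set D} (hT : IsRelRigid 𝓡 T) (hST : S ⊆ T) : IsRelRigid 𝓡 S :=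
  fun X hX X' hX' => hT X (hST hX) X' (hST hX')

lemma isRelRigid_insert_iff {𝓧 : Set D} {M : D} :
    IsRelRigid 𝓡 (insert M 𝓧) ↔
      IsRelRigid 𝓡 𝓧 ∧ relOrthTo 𝓡 𝓧 M ∧ relOrthFrom 𝓡 𝓧 M ∧ relOrthTo 𝓡 {M} M := by
  constructor
  · intro h
    have hM := Set.mem_insert M 𝓧
    have h𝓧 := Set.subset_insert M 𝓧
    exact ⟨h.mono h𝓧, fun X hX => h M hM X (h𝓧 hX), fun X hX => h X (h𝓧 hX) M hM,
      h.mono (Set.singleton_subset_iff.2 hM) M rfl⟩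
  · rintro ⟨h𝓧, hto, hfrom, hself⟩ X hX X' hX'
    obtain rfl | hX := hX <;> obtain rfl | hX' := hX'
    exacts [hself _ rfl, hto _ hX', hfrom _ hX, h𝓧 _ hX _ hX']

variable [(shiftFunctor D (1 : ℤ)).Additive]

variable (𝓡) in
lemma isSubcat_setOf_relOrthFrom (S : Set D) : IsSubcat {M | relOrthFrom 𝓡 S M} := by
  apply IsSubcat.of_retract
  · rintro F G T hF hG ⟨i, j, p, q, -, -, -, -, htotal⟩ V hV φ hφ
    calc φ = (φ ≫ p⟦1⟧') ≫ i⟦1⟧' + (φ ≫ q⟦1⟧') ≫ j⟦1⟧' := by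
          simp only [Category.assoc, ← Functor.map_comp, ← Preadditive.comp_add,
            ← Functor.map_add, htotal, CategoryTheory.Functor.map_id, Category.comp_id]
      _ = 0 := by
          rw [hF V hV _ (hφ.postcomp _), hG V hV _ (hφ.postcomp _), zero_comp, zero_comp, add_zero]
  · rintro X Y hX ⟨s, r, hsr⟩ V hV φ hφ
    calc φ = (φ ≫ s⟦1⟧') ≫ r⟦1⟧' := by
          rw [Category.assoc, ← Functor.map_comp, hsr, CategoryTheory.Functor.map_id,
            Category.comp_id]
      _ = 0 := by rw [hX V hV _ (hφ.postcomp _), zero_comp]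

lemma isRelRigid_veeAdd_iff {𝓧 : Set D} {M : D} :
    IsRelRigid 𝓡 (veeAdd 𝓧 M) ↔ IsRelRigid 𝓡 (insert M 𝓧) := by
  refine ⟨fun h => h.mono (insert_subset_veeAdd 𝓧 M), fun h => ?_⟩
  have hto : veeAdd 𝓧 M ⊆ {A | relOrthTo 𝓡 (insert M 𝓧) A} :=
    veeAdd_subset (isSubcat_setOf_relOrthTo 𝓡 _) h
  have hfrom : veeAdd 𝓧 M ⊆ {B | relOrthFrom 𝓡 (veeAdd 𝓧 M) B} :=
    veeAdd_subset (isSubcat_setOf_relOrthFrom 𝓡 _) fun B hB A hA => hto hA B hB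
  exact fun A hA B hB => hfrom hB A hA

end RelativeRigidity

section Maximality

variable {𝓡 : Set C}

lemma IsTwoTermMaxRelRigid.mem_of_relOrth {𝓧 : Set C} (h : IsTwoTermMaxRelRigid 𝓡 𝓧) {M : C}
    (hM : M ∈ twoTerm 𝓡) (hto : relOrthTo 𝓡 𝓧 M) (hfrom : relOrthFrom 𝓡 𝓧 M)
    (hself : relOrthTo 𝓡 {M} M) : M ∈ 𝓧 :=
  h.2.2 M hM <| isRelRigid_veeAdd_iff.2 <| isRelRigid_insert_iff.2 ⟨h.2.1, hto, hfrom, hself⟩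

lemma IsTwoTermRelCT.isTwoTermMaxRelRigid {𝓧 : Set C} (h : IsTwoTermRelCT 𝓡 𝓧) :
    IsTwoTermMaxRelRigid 𝓡 𝓧 := by
  obtain ⟨h𝓧, -, hmem⟩ := h
  refine ⟨h𝓧, fun X hX => ((hmem X).1 hX).2.1, fun M hM hrigid => ?_⟩
  obtain ⟨-, hto, hfrom, -⟩ := isRelRigid_insert_iff.1 (isRelRigid_veeAdd_iff.1 hrigid)
  exact (hmem M).2 ⟨hM, hto, hfrom⟩

end Maximality

section TwoTermTriangle

/-- A two-term triangle: a distinguished triangle `A ⟶ M ⟶ B ⟶ A⟦1⟧` with `A ∈ 𝓡` and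
`B ∈ 𝓡⟦1⟧`, exhibiting `M` as an object of `𝓡 ∗ 𝓡[1]`. -/
structure IsTwoTermTriangle (𝓡 : Set C) (T : Triangle C) : Prop where
  distinguished : T ∈ distTriang C
  obj₁_mem : T.obj₁ ∈ 𝓡
  obj₃_mem : T.obj₃ ∈ shiftSet 𝓡 1

variable {𝓡 : Set C}

lemma mem_twoTerm_iff {M : C} : M ∈ twoTerm 𝓡 ↔ ∃ T, IsTwoTermTriangle 𝓡 T ∧ T.obj₂ = M := by
  constructor
  · rintro ⟨A, hA, B, hB, f, g, h, hT⟩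
    exact ⟨Triangle.mk f g h, ⟨hT, hA, hB⟩, rfl⟩
  · rintro ⟨T, hT, rfl⟩
    exact ⟨T.obj₁, hT.obj₁_mem, T.obj₃, hT.obj₃_mem, T.mor₁, T.mor₂, T.mor₃, hT.distinguished⟩

namespace IsTwoTermTriangle

variable {T : Triangle C}

theorem relOrthFrom_iff_isRightApprox (hT : IsTwoTermTriangle 𝓡 T) (h𝓡 : IsRigidSubcat 𝓡)
    (S : Set C) : relOrthFrom 𝓡 S T.obj₂ ↔ IsRightApprox S T.mor₃ := by
  constructor
  · intro horth M hM x
    have hx : x ≫ T.mor₁⟦1⟧' = 0 := horth M hM _ ⟨T.obj₁, hT.obj₁_mem, x, _, rfl⟩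
    obtain ⟨c, hc⟩ := T.coyoneda_exact₁ hT.distinguished x hx
    exact ⟨c, hc.symm⟩
  · rintro happrox M hM _ ⟨R, hR, a, b, rfl⟩
    -- By rigidity `b : R⟦1⟧ ⟶ T.obj₂⟦1⟧` factors through the shift of `T.mor₁`.
    obtain ⟨b, rfl⟩ := (shiftFunctor C (1 : ℤ)).map_surjective b
    obtain ⟨y, rfl⟩ := T.coyoneda_exact₂ hT.distinguished b
      (h𝓡.eq_zero_of_mem_shiftSet hR hT.obj₃_mem _)
    obtain ⟨c, hc⟩ := happrox M hM (a ≫ y⟦1⟧')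
    rw [Functor.map_comp, ← Category.assoc, ← hc, Category.assoc,
      comp_distTriang_mor_zero₃₁ _ hT.distinguished, comp_zero]

theorem relOrthTo_iff_isLeftApprox (hT : IsTwoTermTriangle 𝓡 T) (h𝓡 : IsRigidSubcat 𝓡)
    (S : Set C) :
    relOrthTo 𝓡 S T.obj₂ ↔ IsLeftApprox ((fun N => N⟦(1 : ℤ)⟧) '' S) T.mor₃ := by
  constructor
  · rintro horth _ ⟨N, hN, rfl⟩ y
    have hy : T.mor₂ ≫ y = 0 :=
      horth N hN _ (inShiftIdeal_comp_of_mem_shiftSet hT.obj₃_mem T.mor₂ y)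
    obtain ⟨s, hs⟩ := T.yoneda_exact₃ hT.distinguished y hy
    exact ⟨s, hs.symm⟩
  · rintro happrox N hN _ ⟨R, hR, a, b, rfl⟩
    -- By rigidity `a : T.obj₂ ⟶ R⟦1⟧` factors through `T.mor₂`.
    obtain ⟨t, rfl⟩ := T.yoneda_exact₂ hT.distinguished a (h𝓡 _ hT.obj₁_mem R hR _)
    obtain ⟨s, hs⟩ := happrox _ (Set.mem_image_of_mem _ hN) (t ≫ b)
    rw [Category.assoc, ← hs, ← Category.assoc, comp_distTriang_mor_zero₂₃ _ hT.distinguished,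
      zero_comp]

end IsTwoTermTriangle

lemma isRightApprox_biprod_lift_mor₃_iff {T : Triangle C} (hT : T ∈ distTriang C) {Q : C}
    (w : T.obj₃ ⟶ Q) (S : Set C) :
    IsRightApprox S (biprod.lift T.mor₃ w) ↔
      IsRightApprox S T.mor₃ ∧ IsRightApprox S (T.mor₂ ≫ w) := by
  constructor
  · refine fun h => ⟨fun M hM x => ?_, fun M hM y => ?_⟩
    · obtain ⟨c, hc⟩ := h M hM (biprod.lift x 0)
      exact ⟨c, by simpa using hc =≫ biprod.fst⟩
    · obtain ⟨c, hc⟩ := h M hM (biprod.lift 0 y)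
      obtain ⟨m, rfl⟩ := T.coyoneda_exact₃ hT c (by simpa using hc =≫ biprod.fst)
      exact ⟨m, by simpa using hc =≫ biprod.snd⟩
  · rintro ⟨h₃, hw⟩ M hM x
    obtain ⟨c, hc⟩ := h₃ M hM (x ≫ biprod.fst)
    obtain ⟨m, hm⟩ := hw M hM (x ≫ biprod.snd - c ≫ w)
    refine ⟨c + m ≫ T.mor₂, ?_⟩
    ext
    · simp [hc, comp_distTriang_mor_zero₂₃ _ hT]
    · simp [hm]

end TwoTermTriangle

namespace IsTwoTermMaxRelRigid

variable {𝓡 𝓧 : Set C}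

theorem isRightApprox_setOf_relOrthTo (h : IsTwoTermMaxRelRigid 𝓡 𝓧)
    (hsum : ∀ R ∈ 𝓡, ∀ R' ∈ 𝓡, (R ⊞ R') ∈ 𝓡) (h𝓡 : IsRigidSubcat 𝓡) {X R : C} (hX : X ∈ 𝓧)
    (hR : R ∈ 𝓡) {u : X ⟶ R⟦(1 : ℤ)⟧} (hu : IsRightApprox 𝓧 u) :
    IsRightApprox {M | relOrthTo 𝓡 𝓧 M} u := by
  obtain ⟨T, hT, rfl⟩ := mem_twoTerm_iff.1 (h.1 hX)
  obtain ⟨w, rfl⟩ := T.yoneda_exact₂ hT.distinguished u (h𝓡 _ hT.obj₁_mem R hR _)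
  have : PreservesBinaryBiproduct T.obj₁ R (shiftFunctor C (1 : ℤ)) :=
    preservesBinaryBiproduct_of_preservesBiproduct _ _ _
  let e := (shiftFunctor C (1 : ℤ)).mapBiprod T.obj₁ R
  let φ : T.obj₃ ⟶ (T.obj₁ ⊞ R)⟦(1 : ℤ)⟧ := biprod.lift T.mor₃ w ≫ e.inv
  obtain ⟨Z, i, j, hdist⟩ := distinguished_cocone_triangle₂ φ
  have hZ : IsTwoTermTriangle 𝓡 (Triangle.mk i j φ) :=
    ⟨hdist, hsum _ hT.obj₁_mem R hR, hT.obj₃_mem⟩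
  have hright (S : Set C) :
      IsRightApprox S φ ↔ IsRightApprox S T.mor₃ ∧ IsRightApprox S (T.mor₂ ≫ w) :=
    (isRightApprox_comp_iso_iff e.symm).trans
      (isRightApprox_biprod_lift_mor₃_iff hT.distinguished w S)
  have hφ_fst : φ ≫ e.hom ≫ biprod.fst = T.mor₃ := by simp [φ]
  have hfrom : relOrthFrom 𝓡 𝓧 Z :=
    (hZ.relOrthFrom_iff_isRightApprox h𝓡 𝓧).2 <| (hright 𝓧).2
      ⟨(hT.relOrthFrom_iff_isRightApprox h𝓡 𝓧).1 fun X' hX' => h.2.1 X' hX' _ hX, hu⟩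
  have hto : relOrthTo 𝓡 {V | relOrthFrom 𝓡 𝓧 V} Z := by
    refine (hZ.relOrthTo_iff_isLeftApprox h𝓡 _).2 (.of_comp (g := e.hom ≫ biprod.fst) ?_)
    exact hφ_fst ▸ (hT.relOrthTo_iff_isLeftApprox h𝓡 _).1 fun _ hV => hV _ hX
  have hZ𝓧 : Z ∈ 𝓧 :=
    h.mem_of_relOrth (mem_twoTerm_iff.2 ⟨_, hZ, rfl⟩)
      (fun V hV => hto V fun X' hX' => h.2.1 X' hX' V hV) hfrom
      (fun V hV => hto V (hV ▸ hfrom))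
  have happrox : IsRightApprox {M | relOrthTo 𝓡 𝓧 M} φ :=
    (hZ.relOrthFrom_iff_isRightApprox h𝓡 _).1 fun M (hM : relOrthTo 𝓡 𝓧 M) => hM Z hZ𝓧
  exact ((hright _).1 happrox).2

theorem relOrthTo_self (h : IsTwoTermMaxRelRigid 𝓡 𝓧)
    (hsum : ∀ R ∈ 𝓡, ∀ R' ∈ 𝓡, (R ⊞ R') ∈ 𝓡) (h𝓡 : IsRigidSubcat 𝓡)
    (hcf : ContravariantlyFinite 𝓧) {M : C} (hto : relOrthTo 𝓡 𝓧 M)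
    (hfrom : relOrthFrom 𝓡 𝓧 M) : relOrthTo 𝓡 {M} M := by
  rintro _ rfl _ ⟨R, hR, a, b, rfl⟩
  obtain ⟨X, hX, u, hu⟩ := hcf (R⟦(1 : ℤ)⟧)
  obtain ⟨m, rfl⟩ := h.isRightApprox_setOf_relOrthTo hsum h𝓡 hX hR hu _ hto a
  rw [Category.assoc, hfrom X hX (u ≫ b) ⟨R, hR, u, b, rfl⟩, comp_zero]

theorem isTwoTermRelCT (h : IsTwoTermMaxRelRigid 𝓡 𝓧)
    (hsum : ∀ R ∈ 𝓡, ∀ R' ∈ 𝓡, (R ⊞ R') ∈ 𝓡) (h𝓡 : IsRigidSubcat 𝓡)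
    (hcf : ContravariantlyFinite 𝓧) : IsTwoTermRelCT 𝓡 𝓧 := by
  refine ⟨h.1, hcf, fun M => ⟨fun hM => ?_, fun ⟨hM, hto, hfrom⟩ => ?_⟩⟩
  · exact ⟨h.1 hM, h.2.1 M hM, fun X hX => h.2.1 X hX M hM⟩
  · exact h.mem_of_relOrth hM hto hfrom (h.relOrthTo_self hsum h𝓡 hcf hto hfrom)

end IsTwoTermMaxRelRigid

theorem twoTermRelCT_iff_contravariantlyFinite_maxRelRigid_general {𝓡 𝓧 : Set C}
    (hsum : ∀ R ∈ 𝓡, ∀ R' ∈ 𝓡, (R ⊞ R') ∈ 𝓡) (h𝓡 : IsRigidSubcat 𝓡) :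
    IsTwoTermRelCT 𝓡 𝓧 ↔ ContravariantlyFinite 𝓧 ∧ IsTwoTermMaxRelRigid 𝓡 𝓧 :=
  ⟨fun h => ⟨h.2.1, h.isTwoTermMaxRelRigid⟩, fun ⟨hcf, h⟩ => h.isTwoTermRelCT hsum h𝓡 hcf⟩

/-- **Theorem (Statement 0).** Let `𝓡` be a rigid subcategory of `C` and `𝓧 ⊆ 𝓡 ∗ 𝓡[1]`
a subcategory. Then `𝓧` is two-term `𝓡[1]`-cluster tilting if and only if `𝓧` is a
contravariantly finite two-term maximal `𝓡[1]`-rigid subcategory. -/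
theorem twoTermRelCT_iff_contravariantlyFinite_maxRelRigid
    (k : Type*) [Field k] [IsAlgClosed k] [Linear k C]
    [∀ X Y : C, FiniteDimensional k (X ⟶ Y)] [IsIdempotentComplete C]
    (𝓡 𝓧 : Set C) (h𝓡sub : IsSubcat 𝓡) (h𝓡 : IsRigidSubcat 𝓡)
    (h𝓧sub : IsSubcat 𝓧) (h𝓧tt : 𝓧 ⊆ twoTerm 𝓡) :
    IsTwoTermRelCT 𝓡 𝓧 ↔ ContravariantlyFinite 𝓧 ∧ IsTwoTermMaxRelRigid 𝓡 𝓧 :=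
  twoTermRelCT_iff_contravariantlyFinite_maxRelRigid_general
    (fun _ hR _ hR' => h𝓡sub.biprod_mem hR hR') h𝓡
end

section
/- Let C be an additive category and X ⊆ A two subcategories of C with X contravariantly finite in C. Then A is contravariantly finite in C if and only if A/X is contravariantly finite in the additive quotient C/X. -/
/-!
Setting: `C` is an additive category. Subcategories are identified with their classes of
objects and are always full, closed under isomorphisms, direct sums and direct summands.
-/

open CategoryTheory CategoryTheory.Limits

universe v u

variable {C : Type u} [Category.{v} C] [Preadditive C] [HasFiniteBiproducts C]

/-- The hom-relation identifying two morphisms whose difference factors through an object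
of `𝓧`; the corresponding quotient category is the additive quotient `C/𝓧` of `C` by the
ideal `[𝓧]`. -/
def factorRel (𝓧 : Set C) : HomRel C := fun {X Y} f g =>
  ∃ Z ∈ 𝓧, ∃ (a : X ⟶ Z) (b : Z ⟶ Y), f - g = a ≫ b

/-- The additive quotient `C/𝓧`. -/
abbrev QuotByX (𝓧 : Set C) := CategoryTheory.Quotient (factorRel 𝓧)

/-!
A right `𝓐`-approximation in `C` stays one in `C/𝓧` because the quotient functor is full.
Conversely, let `f : A ⟶ Y` become a right `𝓐/𝓧`-approximation in `C/𝓧`, and let `x : X ⟶ Y` be a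
right `𝓧`-approximation. A map from an object of `𝓐` to `Y` factors through `f` up to the ideal
`[𝓧]`, and the error, which ends in `Y`, factors through `x`. Hence `(f, x) : A ⊞ X ⟶ Y` is a right
`𝓐`-approximation.
-/

section Category

variable {D E : Type*} [Category D] [Category E] {𝓐 : Set D}

lemma IsRightApprox.comp_iso {A Y Z : D} {f : A ⟶ Y} (hf : IsRightApprox 𝓐 f) (e : Y ≅ Z) :
    IsRightApprox 𝓐 (f ≫ e.hom) := by
  intro A' hA' g
  obtain ⟨k, hk⟩ := hf A' hA' (g ≫ e.inv)
  exact ⟨k, by rw [← Category.assoc, hk, Category.assoc, e.inv_hom_id, Category.comp_id]⟩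

lemma IsRightApprox.map (F : D ⥤ E) [F.Full] {A Y : D} {f : A ⟶ Y} (hf : IsRightApprox 𝓐 f) :
    IsRightApprox (F.obj '' 𝓐) (F.map f) := by
  rintro _ ⟨A', hA', rfl⟩ g
  obtain ⟨g, rfl⟩ := F.map_surjective g
  obtain ⟨k, rfl⟩ := hf A' hA' g
  exact ⟨F.map k, (F.map_comp k f).symm⟩

lemma ContravariantlyFinite.map (F : D ⥤ E) [F.Full] [F.EssSurj] (h : ContravariantlyFinite 𝓐) :
    ContravariantlyFinite (F.obj '' 𝓐) := by
  intro Z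
  obtain ⟨A, hA, f, hf⟩ := h (F.objPreimage Z)
  exact ⟨F.obj A, ⟨A, hA, rfl⟩, F.map f ≫ (F.objObjPreimageIso Z).hom, (hf.map F).comp_iso _⟩

end Category

section Preadditive

variable {D : Type*} [Category D] [Preadditive D] {𝓧 𝓐 : Set D}

lemma isDirectSumOf_biprod (F G : D) [HasBinaryBiproduct F G] : IsDirectSumOf (F ⊞ G) F G :=
  ⟨biprod.inl, biprod.inr, biprod.fst, biprod.snd, biprod.inl_fst, biprod.inr_snd,
    biprod.inl_snd, biprod.inr_fst, biprod.total⟩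

lemma IsDirectSumOf.exists_desc {S F G Y : D} (hS : IsDirectSumOf S F G) (f : F ⟶ Y) (g : G ⟶ Y) :
    ∃ (i : F ⟶ S) (j : G ⟶ S) (t : S ⟶ Y), i ≫ t = f ∧ j ≫ t = g := by
  obtain ⟨i, j, p, q, hip, hjq, hiq, hjp, -⟩ := hS
  exact ⟨i, j, p ≫ f + q ≫ g, by simp [reassoc_of% hip, reassoc_of% hiq],
    by simp [reassoc_of% hjq, reassoc_of% hjp]⟩

instance (𝓧 : Set D) : HomRel.IsStableUnderPrecomp (factorRel 𝓧) where
  comp_left := by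
    rintro _ _ _ f g g' ⟨Z, hZ, a, b, hab⟩
    exact ⟨Z, hZ, f ≫ a, b, by rw [← Preadditive.comp_sub, hab, Category.assoc]⟩

instance (𝓧 : Set D) : HomRel.IsStableUnderPostcomp (factorRel 𝓧) where
  comp_right := by
    rintro _ _ _ f f' g ⟨Z, hZ, a, b, hab⟩
    exact ⟨Z, hZ, a, b ≫ g, by rw [← Preadditive.sub_comp, hab, Category.assoc]⟩

lemma IsRightApprox.exists_comp_eq_sub_of_factorRel {X Y Z : D} {x : X ⟶ Y}
    (hx : IsRightApprox 𝓧 x) {g g' : Z ⟶ Y} (h : factorRel 𝓧 g g') :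
    ∃ l : Z ⟶ X, l ≫ x = g - g' := by
  obtain ⟨W, hW, a, b, hab⟩ := h
  obtain ⟨l, rfl⟩ := hx W hW b
  exact ⟨a ≫ l, by rw [hab, Category.assoc]⟩

-- Equality in the quotient is the equivalence relation generated by `factorRel 𝓧`; a chain of such
-- relations collapses because the maps into `Y` that factor through `x` form a subgroup.
lemma IsRightApprox.exists_comp_eq_sub_of_map_eq {X Y Z : D} {x : X ⟶ Y}
    (hx : IsRightApprox 𝓧 x) {g g' : Z ⟶ Y}
    (h : (Quotient.functor (factorRel 𝓧)).map g = (Quotient.functor (factorRel 𝓧)).map g') :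
    ∃ l : Z ⟶ X, l ≫ x = g - g' := by
  replace h : Relation.EqvGen (factorRel 𝓧 (X := Z) (Y := Y)) g g' := by
    simpa only [HomRel.compClosure_eq_self] using
      (Quotient.functor_homRel_eq_compClosure_eqvGen _ g g').1 h
  induction h with
  | rel g g' h => exact hx.exists_comp_eq_sub_of_factorRel h
  | refl g => exact ⟨0, by rw [zero_comp, sub_self]⟩
  | symm g g' _ ih =>
    obtain ⟨l, hl⟩ := ih
    exact ⟨-l, by rw [Preadditive.neg_comp, hl, neg_sub]⟩
  | trans g g' g'' _ _ ih ih' =>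
    obtain ⟨l, hl⟩ := ih
    obtain ⟨l', hl'⟩ := ih'
    exact ⟨l + l', by rw [Preadditive.add_comp, hl, hl', sub_add_sub_cancel]⟩

lemma IsRightApprox.exists_eq_comp_add_comp {A A' X Y : D} {f : A ⟶ Y} {x : X ⟶ Y}
    (hf : IsRightApprox ((Quotient.functor (factorRel 𝓧)).obj '' 𝓐)
      ((Quotient.functor (factorRel 𝓧)).map f))
    (hx : IsRightApprox 𝓧 x) (hA' : A' ∈ 𝓐) (g : A' ⟶ Y) :
    ∃ (k : A' ⟶ A) (l : A' ⟶ X), g = k ≫ f + l ≫ x := by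
  let Q := Quotient.functor (factorRel 𝓧)
  obtain ⟨k, hk⟩ := hf (Q.obj A') ⟨A', hA', rfl⟩ (Q.map g)
  obtain ⟨k, rfl⟩ := Q.map_surjective k
  have hgk : Q.map g = Q.map (k ≫ f) := by rw [Q.map_comp, hk]
  obtain ⟨l, hl⟩ := hx.exists_comp_eq_sub_of_map_eq hgk
  exact ⟨k, l, by rw [hl, add_sub_cancel]⟩

lemma ContravariantlyFinite.of_quotient (h𝓧 : ContravariantlyFinite 𝓧)
    (hsum : ∀ A ∈ 𝓐, ∀ X ∈ 𝓧, ∃ S ∈ 𝓐, IsDirectSumOf S A X)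
    (h : ContravariantlyFinite ((Quotient.functor (factorRel 𝓧)).obj '' 𝓐)) :
    ContravariantlyFinite 𝓐 := by
  intro Y
  let Q := Quotient.functor (factorRel 𝓧)
  obtain ⟨_, ⟨A, hA, rfl⟩, f, hf⟩ := h (Q.obj Y)
  obtain ⟨f, rfl⟩ := Q.map_surjective f
  obtain ⟨X, hX, x, hx⟩ := h𝓧 Y
  obtain ⟨S, hS, hSsum⟩ := hsum A hA X hX
  obtain ⟨i, j, t, rfl, rfl⟩ := hSsum.exists_desc f x
  refine ⟨S, hS, t, fun A' hA' g => ?_⟩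
  obtain ⟨k, l, rfl⟩ := hf.exists_eq_comp_add_comp hx hA' g
  exact ⟨k ≫ i + l ≫ j, by simp only [Preadditive.add_comp, Category.assoc]⟩

lemma quotient_functor_obj_image (𝓧 𝓐 : Set D) :
    (Quotient.functor (factorRel 𝓧)).obj '' 𝓐 = {q : QuotByX 𝓧 | q.as ∈ 𝓐} :=
  (Quotient.equiv (factorRel 𝓧)).symm.image_eq_preimage_symm 𝓐

theorem contravariantlyFinite_iff_quotient_general (h𝓧 : ContravariantlyFinite 𝓧)
    (hsum : ∀ A ∈ 𝓐, ∀ X ∈ 𝓧, ∃ S ∈ 𝓐, IsDirectSumOf S A X) :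
    ContravariantlyFinite 𝓐 ↔ ContravariantlyFinite {q : QuotByX 𝓧 | q.as ∈ 𝓐} := by
  rw [← quotient_functor_obj_image]
  exact ⟨.map _, .of_quotient h𝓧 hsum⟩

end Preadditive

/-- **Lemma (Statement 6).** Let `𝓧 ⊆ 𝓐` be subcategories of an additive category `C`
with `𝓧` contravariantly finite in `C`. Then `𝓐` is contravariantly finite in `C` if and
only if `𝓐/𝓧` is contravariantly finite in `C/𝓧`. -/
theorem contravariantlyFinite_iff_quotient
    (𝓧 𝓐 : Set C) (h𝓧sub : IsSubcat 𝓧) (h𝓐sub : IsSubcat 𝓐) (hXA : 𝓧 ⊆ 𝓐) (h𝓧cf : ContravariantlyFinite 𝓧) :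
    ContravariantlyFinite 𝓐 ↔
      ContravariantlyFinite {q : QuotByX 𝓧 | q.as ∈ 𝓐} := by
  have := hasBinaryBiproducts_of_finite_biproducts C
  exact contravariantlyFinite_iff_quotient_general h𝓧cf fun A hA X hX =>
    ⟨A ⊞ X, h𝓐sub.2.1 hA (hXA hX) (isDirectSumOf_biprod A X), isDirectSumOf_biprod A X⟩
end
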